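/- Let R be a commutative ring, 𝔗 a half centered torsion theory over R, 𝔞 a finitely generated ideal of R with generating set y₁,…,y_s, and M an R-module. If x₁,…,x_r is a weak M-regular sequence with respect to 𝔗 consisting of elements of 𝔞, then the Koszul cohomology modules H^i(y₁,…,y_s; M) belong to 𝔗 for all 0 ≤ i ≤ r−1; moreover, H^r(y₁,…,y_s; M) ∉ 𝔗 if and only if H^0(y₁,…,y_s; M/(x₁,…,x_r)M) ∉ 𝔗. -/

import Mathlib

open CategoryTheory

universe u

noncomputable section

/-- A torsion theory over `R`: a class of `R`-modules closed under isomorphism, submodules,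
quotient modules, extensions, and directed colimits (formulated as closure under directed
unions of submodules). -/
structure IsTorsionTheory (R : Type u) [CommRing R] (T : Set (ModuleCat.{u} R)) : Prop where
  mem_of_iso : ∀ {N N' : ModuleCat.{u} R}, (N ≅ N') → N ∈ T → N' ∈ T
  submodule_mem : ∀ {N : ModuleCat.{u} R}, N ∈ T → ∀ S : Submodule R N,
    ModuleCat.of R S ∈ T
  quotient_mem : ∀ {N : ModuleCat.{u} R}, N ∈ T → ∀ S : Submodule R N,
    ModuleCat.of R (N ⧸ S) ∈ T
  ext_mem : ∀ {N : ModuleCat.{u} R} (S : Submodule R N),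
    ModuleCat.of R S ∈ T → ModuleCat.of R (N ⧸ S) ∈ T → N ∈ T
  directed_mem : ∀ {N : ModuleCat.{u} R} {ι : Type u} [Nonempty ι] (S : ι → Submodule R N),
    Directed (· ≤ ·) S → (∀ i, ModuleCat.of R (S i) ∈ T) → iSup S = ⊤ → N ∈ T

variable {R : Type u} [CommRing R]

/-- The "outgoing" differential of the Koszul cocomplex `Hom_R(K_•(x), M)`, whose degree `i`
component is indexed by the `i`-element subsets of `{1, …, r}`. -/
def koszulDiff {r : ℕ} (x : Fin r → R) (M : Type u) [AddCommGroup M] [Module R M] (i : ℕ) :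
    ({s : Finset (Fin r) // s.card = i} → M) →ₗ[R]
      ({s : Finset (Fin r) // s.card = i + 1} → M) where
  toFun φ t := ∑ j ∈ t.1.attach,
    ((-1 : R) ^ (t.1.filter (fun k => k < j.1)).card * x j.1) •
      φ ⟨t.1.erase j.1, by simp [Finset.card_erase_of_mem j.2, t.2]⟩
  map_add' φ ψ := by
    funext t
    simp [Finset.sum_add_distrib, smul_add]
  map_smul' c φ := by
    funext t
    simp [Finset.smul_sum, smul_comm c]

/-- The "incoming" differential of the Koszul cocomplex in degree `i`
(its source is trivial when `i = 0`). -/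
def koszulDiffIn {r : ℕ} (x : Fin r → R) (M : Type u) [AddCommGroup M] [Module R M] (i : ℕ) :
    ({s : Finset (Fin r) // s.card + 1 = i} → M) →ₗ[R]
      ({s : Finset (Fin r) // s.card = i} → M) where
  toFun φ t := ∑ j ∈ t.1.attach,
    ((-1 : R) ^ (t.1.filter (fun k => k < j.1)).card * x j.1) •
      φ ⟨t.1.erase j.1, by rw [Finset.card_erase_add_one j.2]; exact t.2⟩
  map_add' φ ψ := by
    funext t
    simp [Finset.sum_add_distrib, smul_add]
  map_smul' c φ := by
    funext t
    simp [Finset.smul_sum, smul_comm c]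

/-- The `i`-th Koszul cohomology `H^i(x; M)` of `M` with respect to `x₁, …, x_r`, i.e. the
`i`-th cohomology of the cocomplex `Hom_R(K_•(x), M)`. -/
abbrev koszulCohomology {r : ℕ} (x : Fin r → R) (M : Type u) [AddCommGroup M] [Module R M]
    (i : ℕ) : Type u :=
  ↥(LinearMap.ker (koszulDiff x M i)) ⧸
    (Submodule.comap (LinearMap.ker (koszulDiff x M i)).subtype
      (LinearMap.range (koszulDiffIn x M i)))

/-- The `𝔗`-Koszul grade of the ideal `(x₁, …, x_r)` on `M`: the infimum of the set of `i`
such that `H^i(x; M) ∉ 𝔗` (with `inf ∅ = +∞`). -/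
def TKgrade (T : Set (ModuleCat.{u} R)) {r : ℕ} (x : Fin r → R) (M : Type u)
    [AddCommGroup M] [Module R M] : ℕ∞ :=
  sInf ((↑· : ℕ → ℕ∞) '' {i | ModuleCat.of R (koszulCohomology x M i) ∉ T})

/-- `x₁, …, x_n` is a weak `M`-regular sequence with respect to `𝔗` if the module
`((x₁,…,x_{i-1})M :_M x_i) / (x₁,…,x_{i-1})M` belongs to `𝔗` for all `i = 1, …, n`. -/
def IsWeakRegularSeqWrt (T : Set (ModuleCat.{u} R)) {n : ℕ} (x : Fin n → R) (M : Type u)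
    [AddCommGroup M] [Module R M] : Prop :=
  ∀ i : Fin n,
    ModuleCat.of R
      ↥(Submodule.map (Ideal.span (x '' {j | j < i}) • (⊤ : Submodule R M)).mkQ
        (Submodule.comap (LinearMap.lsmul R M (x i))
          (Ideal.span (x '' {j | j < i}) • (⊤ : Submodule R M)))) ∈ T

/-- A torsion theory `𝔗` is half centered if every module `N` such that `R/𝔭 ∈ 𝔗` for all
primes `𝔭` in the support of `N` itself belongs to `𝔗`. -/
def IsHalfCentered {R : Type u} [CommRing R] (T : Set (ModuleCat.{u} R)) : Prop :=
  ∀ N : ModuleCat.{u} R,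
    (∀ p ∈ Module.support R N, ModuleCat.of R (R ⧸ p.asIdeal) ∈ T) → N ∈ T

/-!
Each `y_k` acts null-homotopically on the Koszul cocomplex, contraction against `e_k` being the
homotopy, so the ideal `(y)` annihilates Koszul cohomology. For a weakly regular sequence,
multiplication by `x_{k+1}` on `M_k = M/(x₁,…,x_k)M` has kernel in the Serre class `𝔗`, hence modulo
`𝔗` there is a short exact sequence `0 → M_k → M_k → M_{k+1} → 0` whose first map vanishes on Koszul
cohomology. Up to `𝔗` its long exact sequence therefore breaks into pieces
`0 → H^i(M_k) → H^i(M_{k+1}) → H^{i+1}(M_k) → 0`, along which membership in `𝔗` climbs down the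
diagonal from `H^0(M_r)` to `H^r(M_0)`.
-/

open Limits HomologicalComplex

theorem homologicalComplex_homologyMap_smul {A C ι : Type*} [Ring A] [Category* C] [Preadditive C]
    [Linear A C] {c : ComplexShape ι} {K L : HomologicalComplex C c} (a : A) (φ : K ⟶ L) (i : ι)
    [K.HasHomology i] [L.HasHomology i] :
    homologyMap (a • φ) i = a • homologyMap φ i :=
  ShortComplex.homologyMap_smul ((shortComplexFunctor C c i).map φ) a

theorem shortExact_kernel {C : Type*} [Category* C] [Abelian C] {X Y : C} (f : X ⟶ Y) [Epi f] :
    (ShortComplex.mk (kernel.ι f) f (kernel.condition f)).ShortExact where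
  exact := ShortComplex.exact_kernel f

section SerreClass

variable {C : Type*} [Category* C] [Abelian C] (P : ObjectProperty C) [P.IsSerreClass]

theorem monoModSerre_of_exact {S : ShortComplex C} (hS : S.Exact) (h₁ : P S.X₁) :
    P.monoModSerre S.g :=
  have := hS.epi_kernelLift
  P.prop_of_epi (kernel.lift S.g S.f S.zero) h₁

theorem epiModSerre_of_exact {S : ShortComplex C} (hS : S.Exact) (h₃ : P S.X₃) :
    P.epiModSerre S.f :=
  have := hS.mono_cokernelDesc
  P.prop_of_mono (cokernel.desc S.f S.g S.zero) h₃

theorem prop_tgt_of_epiModSerre {X Y : C} {f : X ⟶ Y} (hf : P.epiModSerre f) (hX : P X) : P Y :=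
  P.prop_X₂_of_exact (ShortComplex.exact_cokernel f) hX hf

theorem prop_src_of_monoModSerre_of_comp_eq_zero {X Y Z : C} {f : X ⟶ Y} {g : Y ⟶ Z}
    (hf : P.monoModSerre f) (hg : P.monoModSerre g) (hfg : f ≫ g = 0) : P X := by
  rw [← P.monoModSerre_zero_iff X Z, ← hfg]
  exact P.monoModSerre.comp_mem f g hf hg

theorem isClosedUnderFiniteProducts_of_isSerreClass : P.IsClosedUnderFiniteProducts := by
  have : P.IsClosedUnderBinaryProducts := .mk fun X ⟨p⟩ ↦
    P.prop_of_iso ((BinaryBiproduct.isLimit _ _).conePointsIsoOfNatIso p.isLimit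
      (diagramIsoPair p.diag).symm)
      (P.prop_biprod (p.prop_diag_obj ⟨.left⟩) (p.prop_diag_obj ⟨.right⟩))
  exact .mk'

variable {ι : Type*} {c : ComplexShape ι}

theorem prop_homology_of_prop_X (K : HomologicalComplex C c) {i : ι} (h : P (K.X i)) :
    P (K.homology i) :=
  P.prop_of_epi (K.homologyπ i) (P.prop_of_mono (K.iCycles i) h)

variable {S : ShortComplex (HomologicalComplex C c)} (hS : S.ShortExact)

include hS

theorem isoModSerre_homologyMap_g (h₁ : ∀ i, P (S.X₁.X i)) (i : ι) :
    P.isoModSerre (homologyMap S.g i) := by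
  refine ⟨monoModSerre_of_exact P (hS.homology_exact₂ i) (prop_homology_of_prop_X P _ (h₁ i)), ?_⟩
  by_cases hi : ∃ j, c.Rel i j
  · obtain ⟨j, hij⟩ := hi
    exact epiModSerre_of_exact P (hS.homology_exact₃ i j hij) (prop_homology_of_prop_X P _ (h₁ j))
  · have := hS.epi_g
    have := epi_homologyMap_of_epi_of_not_rel S.g i (not_exists.1 hi)
    exact P.epiModSerre_of_epi _

variable {φ : S.X₂ ⟶ S.X₁} {i j : ι}

theorem prop_homology_X₂_of_not_rel (hj : ∀ i, ¬ c.Rel i j)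
    (hφ : P.monoModSerre (homologyMap φ j)) (hφf : homologyMap (φ ≫ S.f) j = 0) :
    P (S.X₂.homology j) := by
  have := hS.mono_f
  have := mono_homologyMap_of_mono_of_not_rel S.f j hj
  exact prop_src_of_monoModSerre_of_comp_eq_zero P hφ (P.monoModSerre_of_mono _)
    ((homologyMap_comp φ S.f j).symm.trans hφf)

theorem prop_homology_X₂_of_prop_homology_X₃ (hij : c.Rel i j)
    (hφ : P.monoModSerre (homologyMap φ j)) (hφf : homologyMap (φ ≫ S.f) j = 0)
    (h₃ : P (S.X₃.homology i)) : P (S.X₂.homology j) :=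
  prop_src_of_monoModSerre_of_comp_eq_zero P hφ
    (monoModSerre_of_exact P (hS.homology_exact₁ i j hij) h₃)
    ((homologyMap_comp φ S.f j).symm.trans hφf)

theorem prop_homology_X₃_of_prop_homology_X₂ (hij : c.Rel i j)
    (hφ : P.epiModSerre (homologyMap φ j))
    (hi : P (S.X₂.homology i)) (hj : P (S.X₂.homology j)) : P (S.X₃.homology i) :=
  P.prop_X₂_of_exact (hS.homology_exact₃ i j hij) hi (prop_tgt_of_epiModSerre P hφ hj)

end SerreClass

section TorsionTheory

variable {T : Set (ModuleCat.{u} R)}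

theorem IsHalfCentered.nonempty (hT : IsHalfCentered T) : T.Nonempty :=
  ⟨.of R PUnit, hT _ fun p hp ↦ by simp [Module.support_eq_empty] at hp⟩

theorem IsTorsionTheory.mem_of_injective (hT : IsTorsionTheory R T) {M N : ModuleCat.{u} R}
    (f : M ⟶ N) (hf : Function.Injective f) (hN : N ∈ T) : M ∈ T :=
  hT.mem_of_iso (LinearEquiv.ofInjective f.hom hf).toModuleIso.symm (hT.submodule_mem hN _)

theorem IsTorsionTheory.mem_of_surjective (hT : IsTorsionTheory R T) {M N : ModuleCat.{u} R}
    (f : M ⟶ N) (hf : Function.Surjective f) (hM : M ∈ T) : N ∈ T :=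
  hT.mem_of_iso (f.hom.quotKerEquivOfSurjective hf).toModuleIso (hT.quotient_mem hM _)

theorem IsTorsionTheory.mem_of_shortExact (hT : IsTorsionTheory R T)
    {S : ShortComplex (ModuleCat.{u} R)} (hS : S.ShortExact) (h₁ : S.X₁ ∈ T) (h₃ : S.X₃ ∈ T) :
    S.X₂ ∈ T := by
  refine hT.ext_mem (LinearMap.ker S.g.hom) ?_ ?_
  · rw [← hS.exact.moduleCat_range_eq_ker]
    exact hT.mem_of_iso
      (LinearEquiv.ofInjective S.f.hom hS.moduleCat_injective_f).toModuleIso h₁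
  · exact hT.mem_of_iso
      (S.g.hom.quotKerEquivOfSurjective hS.moduleCat_surjective_g).toModuleIso.symm h₃

theorem IsTorsionTheory.isSerreClass (hT : IsTorsionTheory R T) (hne : T.Nonempty) :
    ObjectProperty.IsSerreClass (· ∈ T) where
  exists_zero := by
    obtain ⟨N, hN⟩ := hne
    exact ⟨_, ModuleCat.isZero_of_subsingleton _, hT.submodule_mem hN ⊥⟩
  prop_of_mono f _ := hT.mem_of_injective f ((ModuleCat.mono_iff_injective f).1 ‹_›)
  prop_of_epi f _ := hT.mem_of_surjective f ((ModuleCat.epi_iff_surjective f).1 ‹_›)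
  prop_X₂_of_shortExact := hT.mem_of_shortExact

end TorsionTheory

section Koszul

open Finset

section ExteriorOperators

theorem sum_mul_sum_eq_zero_of_anticomm {A ι : Type*} [Ring A] (s : Finset ι) {f : ι → A}
    (hsq : ∀ i ∈ s, f i * f i = 0)
    (hanti : (s : Set ι).Pairwise fun i j ↦ f i * f j + f j * f i = 0) :
    (∑ i ∈ s, f i) * ∑ i ∈ s, f i = 0 := by
  classical
  induction s using Finset.induction_on with
  | empty => simp
  | insert a s ha ih =>
    have hcross : f a * ∑ i ∈ s, f i + (∑ i ∈ s, f i) * f a = 0 := by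
      rw [mul_sum, sum_mul, ← sum_add_distrib]
      exact sum_eq_zero fun i hi ↦ hanti (mem_insert_self a s) (mem_insert_of_mem hi)
        (ne_of_mem_of_not_mem hi ha).symm
    have hsum := ih (fun i hi ↦ hsq i (mem_insert_of_mem hi))
      (hanti.mono (coe_subset.2 (subset_insert a s)))
    rw [sum_insert ha, add_mul, mul_add, mul_add, hsq a (mem_insert_self a s), hsum, zero_add,
      add_zero, hcross]

variable {ι : Type*} [LinearOrder ι]

variable (R) in
/-- The sign of moving the generator `e_j` past the generators `e_k` with `k ∈ t`, `k < j`. -/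
def koszulSign (j : ι) (t : Finset ι) : R :=
  (-1) ^ #{k ∈ t | k < j}

theorem koszulSign_mul_self (j : ι) (t : Finset ι) : koszulSign R j t * koszulSign R j t = 1 := by
  rw [koszulSign, ← mul_pow, neg_one_mul, neg_neg, one_pow]

theorem koszulSign_insert {j k : ι} {t : Finset ι} (hk : k ∉ t) :
    koszulSign R j (insert k t) =
      if k < j then -koszulSign R j t else koszulSign R j t := by
  rw [koszulSign, filter_insert]
  split_ifs with h
  · rw [card_insert_of_notMem (by simp [hk]), pow_succ, mul_neg_one, koszulSign]
  · rfl

theorem koszulSign_erase {j k : ι} {t : Finset ι} (hk : k ∈ t) :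
    koszulSign R j (t.erase k) =
      if k < j then -koszulSign R j t else koszulSign R j t := by
  rw [← insert_erase hk, koszulSign_insert (notMem_erase k t), insert_erase hk]
  split_ifs <;> simp

theorem koszulSign_insert_self (j : ι) (t : Finset ι) :
    koszulSign R j (insert j t) = koszulSign R j t := by
  simp [koszulSign, filter_insert]

theorem koszulSign_erase_self (j : ι) (t : Finset ι) :
    koszulSign R j (t.erase j) = koszulSign R j t := by
  simp [koszulSign, filter_erase]

variable (R) (M : Type*) [AddCommGroup M] [Module R M]

/-- Exterior multiplication by the generator `e_j` on Koszul cochains of all degrees at once: a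
family `Φ : Finset ι → M` stands for `∑ Φ(t) e_t` in `M ⊗ ⋀ Rⁿ`. -/
def koszulWedge (j : ι) : Module.End R (Finset ι → M) where
  toFun Φ t := if j ∈ t then koszulSign R j t • Φ (t.erase j) else 0
  map_add' Φ Ψ := by ext t; dsimp only [Pi.add_apply]; split_ifs <;> simp
  map_smul' c Φ := by ext t; dsimp only [Pi.smul_apply]; split_ifs <;> simp [smul_comm c]

/-- Contraction against the generator `e_k` on Koszul cochains of all degrees at once. -/
def koszulContract (k : ι) : Module.End R (Finset ι → M) where
  toFun Φ t := if k ∈ t then 0 else koszulSign R k t • Φ (insert k t)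
  map_add' Φ Ψ := by ext t; dsimp only [Pi.add_apply]; split_ifs <;> simp
  map_smul' c Φ := by ext t; dsimp only [Pi.smul_apply]; split_ifs <;> simp [smul_comm c]

variable {R M}

theorem koszulWedge_apply (j : ι) (Φ : Finset ι → M) (t : Finset ι) :
    koszulWedge R M j Φ t = if j ∈ t then koszulSign R j t • Φ (t.erase j) else 0 := rfl

theorem koszulContract_apply (k : ι) (Φ : Finset ι → M) (t : Finset ι) :
    koszulContract R M k Φ t = if k ∈ t then 0 else koszulSign R k t • Φ (insert k t) := rfl

theorem koszulWedge_mul_self (j : ι) : koszulWedge R M j * koszulWedge R M j = 0 := by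
  ext Φ t
  simp [koszulWedge_apply]

theorem koszulWedge_anticomm {j k : ι} (hjk : j ≠ k) :
    koszulWedge R M j * koszulWedge R M k + koszulWedge R M k * koszulWedge R M j = 0 := by
  ext Φ t
  by_cases hj : j ∈ t <;> by_cases hk : k ∈ t <;>
    simp only [koszulWedge_apply, LinearMap.add_apply, Module.End.mul_apply, LinearMap.zero_apply,
      Pi.add_apply, Pi.zero_apply, mem_erase, hj, hk, hjk, hjk.symm, ne_eq, not_false_eq_true,
      and_self, and_false, if_true, if_false, smul_zero, add_zero]
  rw [koszulSign_erase hj, koszulSign_erase hk, erase_right_comm, smul_smul, smul_smul, ← add_smul]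
  rcases hjk.lt_or_gt with h | h <;> simp [h, h.not_gt, mul_comm]

theorem koszulWedge_contract_self (k : ι) :
    koszulWedge R M k * koszulContract R M k + koszulContract R M k * koszulWedge R M k = 1 := by
  ext Φ t
  by_cases hk : k ∈ t <;>
    simp [koszulWedge_apply, koszulContract_apply, hk, smul_smul, koszulSign_erase_self,
      koszulSign_insert_self, koszulSign_mul_self]

theorem koszulWedge_contract_anticomm {j k : ι} (hjk : j ≠ k) :
    koszulWedge R M j * koszulContract R M k + koszulContract R M k * koszulWedge R M j = 0 := by
  ext Φ t
  by_cases hj : j ∈ t <;> by_cases hk : k ∈ t <;>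
    simp only [koszulWedge_apply, koszulContract_apply, LinearMap.add_apply, Module.End.mul_apply,
      LinearMap.zero_apply, Pi.add_apply, Pi.zero_apply, mem_erase, mem_insert, hj, hk, hjk,
      hjk.symm, ne_eq, not_false_eq_true, and_self, and_false, or_self,
      or_true, if_true, if_false, smul_zero, add_zero]
  rw [koszulSign_erase hj, koszulSign_insert hk, erase_insert_of_ne hjk.symm, smul_smul, smul_smul,
    ← add_smul]
  rcases hjk.lt_or_gt with h | h <;> simp [h, h.not_gt, mul_comm]

variable [Fintype ι] (y : ι → R)

variable (M) in
/-- The Koszul differential on cochains of all degrees at once: exterior multiplication by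
`∑ y_j e_j`. -/
def koszulTotalDiff : Module.End R (Finset ι → M) :=
  ∑ j, y j • koszulWedge R M j

theorem koszulTotalDiff_apply (Φ : Finset ι → M) (t : Finset ι) :
    koszulTotalDiff M y Φ t = ∑ j ∈ t, (koszulSign R j t * y j) • Φ (t.erase j) := by
  simp [koszulTotalDiff, koszulWedge_apply, LinearMap.sum_apply, sum_ite_mem, smul_smul, mul_comm]

theorem koszulTotalDiff_mul_self : koszulTotalDiff M y * koszulTotalDiff M y = 0 := by
  refine sum_mul_sum_eq_zero_of_anticomm univ (fun j _ ↦ ?_) fun j _ k _ hjk ↦ ?_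
  · rw [smul_mul_smul_comm, koszulWedge_mul_self, smul_zero]
  · simp only [smul_mul_smul_comm, mul_comm (y k)]
    rw [← smul_add, koszulWedge_anticomm hjk, smul_zero]

theorem koszulTotalDiff_contract (k : ι) :
    koszulTotalDiff M y * koszulContract R M k + koszulContract R M k * koszulTotalDiff M y =
      y k • 1 := by
  simp only [koszulTotalDiff, sum_mul, mul_sum, smul_mul_assoc, mul_smul_comm, ← sum_add_distrib,
    ← smul_add]
  rw [sum_eq_single k (fun j _ hjk ↦ by rw [koszulWedge_contract_anticomm hjk, smul_zero])
    (by simp), koszulWedge_contract_self]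

end ExteriorOperators

section KoszulCohomology

variable {s : ℕ} (y : Fin s → R) (M : Type u) [AddCommGroup M] [Module R M]

variable {M} in
theorem koszulDiff_comp_val (i : ℕ) (Φ : Finset (Fin s) → M) :
    koszulDiff y M i (Φ ∘ Subtype.val) = koszulTotalDiff M y Φ ∘ Subtype.val := by
  ext t
  exact (sum_attach t.1 fun j ↦ (koszulSign R j t.1 * y j) • Φ (t.1.erase j)).trans
    (koszulTotalDiff_apply y Φ t).symm

variable {M} in
theorem koszulDiffIn_comp_val (i : ℕ) (Φ : Finset (Fin s) → M) :
    koszulDiffIn y M i (Φ ∘ Subtype.val) = koszulTotalDiff M y Φ ∘ Subtype.val := by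
  ext t
  exact (sum_attach t.1 fun j ↦ (koszulSign R j t.1 * y j) • Φ (t.1.erase j)).trans
    (koszulTotalDiff_apply y Φ t).symm

theorem koszulDiff_comp_koszulDiff (i : ℕ) :
    koszulDiff y M (i + 1) ∘ₗ koszulDiff y M i = 0 := by
  refine LinearMap.ext fun φ ↦ ?_
  obtain ⟨Φ, rfl⟩ := Subtype.val_injective.surjective_comp_right φ
  simp only [LinearMap.comp_apply, koszulDiff_comp_val, ← Module.End.mul_apply,
    koszulTotalDiff_mul_self]
  rfl

variable {M y} in
theorem smul_mem_range_koszulDiffIn {i : ℕ} (k : Fin s)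
    {φ : {t : Finset (Fin s) // t.card = i} → M} (hφ : φ ∈ LinearMap.ker (koszulDiff y M i)) :
    y k • φ ∈ LinearMap.range (koszulDiffIn y M i) := by
  obtain ⟨Φ, rfl⟩ := Subtype.val_injective.surjective_comp_right φ
  rw [LinearMap.mem_ker, koszulDiff_comp_val] at hφ
  refine ⟨koszulContract R M k Φ ∘ Subtype.val, ?_⟩
  rw [koszulDiffIn_comp_val]
  ext t
  have hcontract : koszulContract R M k (koszulTotalDiff M y Φ) t = 0 := by
    rw [koszulContract_apply]
    split_ifs with hk
    · rfl
    · have hinsert : koszulTotalDiff M y Φ (insert k t) = 0 :=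
        congrFun hφ ⟨insert k t, by rw [card_insert_of_notMem hk, t.2]⟩
      rw [hinsert, smul_zero]
  have hhomotopy := congrFun (LinearMap.congr_fun (koszulTotalDiff_contract (M := M) y k) Φ) t
  rw [LinearMap.add_apply, Pi.add_apply, Module.End.mul_apply, Module.End.mul_apply, hcontract,
    add_zero] at hhomotopy
  exact hhomotopy

theorem span_le_annihilator_koszulCohomology (i : ℕ) :
    Ideal.span (Set.range y) ≤ Module.annihilator R (koszulCohomology y M i) := by
  rw [Ideal.span_le, Set.range_subset_iff]
  refine fun k ↦ Module.mem_annihilator.2 fun z ↦ ?_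
  obtain ⟨φ, rfl⟩ := Submodule.Quotient.mk_surjective _ z
  rw [← Submodule.Quotient.mk_smul, Submodule.Quotient.mk_eq_zero]
  exact smul_mem_range_koszulDiffIn k φ.2

/-- The Koszul cocomplex `Hom_R(K_•(y), M)`. -/
abbrev koszulComplex (M : ModuleCat.{u} R) : CochainComplex (ModuleCat.{u} R) ℕ :=
  CochainComplex.of (fun i ↦ .of R ({t : Finset (Fin s) // t.card = i} → M))
    (fun i ↦ ModuleCat.ofHom (koszulDiff y M i))
    fun i ↦ ModuleCat.hom_ext (koszulDiff_comp_koszulDiff y M i)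

/-- The functoriality of the Koszul cocomplex in the module. -/
def koszulFunctor : ModuleCat.{u} R ⥤ CochainComplex (ModuleCat.{u} R) ℕ where
  obj := koszulComplex y
  map f := CochainComplex.ofHom (fun i ↦ ModuleCat.ofHom (f.hom.compLeft _)) fun i ↦ by
    simp only [CochainComplex.of_d]
    ext φ t
    simp [koszulDiff]

instance : (koszulFunctor y).Additive where
  map_add := HomologicalComplex.hom_ext _ _ fun _ ↦ rfl

instance : (koszulFunctor y).Linear R where
  map_smul _ _ := HomologicalComplex.hom_ext _ _ fun _ ↦ rfl

theorem exact_compLeft {R L M N : Type*} [Semiring R] [AddCommMonoid L] [AddCommMonoid M]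
    [AddCommMonoid N] [Module R L] [Module R M] [Module R N] {f : L →ₗ[R] M} {g : M →ₗ[R] N}
    (hfg : Function.Exact f g) (I : Type*) : Function.Exact (f.compLeft I) (g.compLeft I) := by
  rw [LinearMap.exact_iff] at hfg ⊢
  rw [LinearMap.ker_compLeft, LinearMap.range_compLeft, hfg]

theorem shortExact_map_koszulFunctor {S : ShortComplex (ModuleCat.{u} R)} (hS : S.ShortExact) :
    (S.map (koszulFunctor y)).ShortExact := by
  refine HomologicalComplex.shortExact_of_degreewise_shortExact _ fun i ↦
    ModuleCat.shortComplex_shortExact _ ?_ ?_ ?_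
  · exact exact_compLeft ((ShortComplex.ShortExact.moduleCat_exact_iff_function_exact S).1 hS.exact)
      {t : Finset (Fin s) // t.card = i}
  · exact hS.moduleCat_injective_f.comp_left (α := {t : Finset (Fin s) // t.card = i})
  · exact hS.moduleCat_surjective_g.comp_left (α := {t : Finset (Fin s) // t.card = i})

variable (M : ModuleCat.{u} R)

theorem koszulComplex_d (i : ℕ) :
    (koszulComplex y M).d i (i + 1) = ModuleCat.ofHom (koszulDiff y M i) :=
  CochainComplex.of_d (fun i ↦ ModuleCat.of R ({t : Finset (Fin s) // t.card = i} → M))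
    (fun i ↦ ModuleCat.ofHom (koszulDiff y M i)) i

theorem range_koszulDiffIn_zero (M : Type u) [AddCommGroup M] [Module R M] :
    LinearMap.range (koszulDiffIn y M 0) = ⊥ := by
  rw [LinearMap.range_eq_bot]
  have : IsEmpty {t : Finset (Fin s) // t.card + 1 = 0} := ⟨fun t ↦ Nat.succ_ne_zero _ t.2⟩
  exact Subsingleton.elim _ _

theorem range_koszulComplex_d_pred (i : ℕ) :
    LinearMap.range ((koszulComplex y M).d (i - 1) i).hom =
      LinearMap.range (koszulDiffIn y M i) := by
  cases i with
  | zero =>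
    rw [range_koszulDiffIn_zero, (koszulComplex y M).shape _ _ (by simp)]
    exact LinearMap.range_zero
  | succ i =>
    rw [Nat.add_sub_cancel, koszulComplex_d]
    ext ψ
    constructor
    · rintro ⟨φ, rfl⟩
      exact ⟨fun t ↦ φ ⟨t.1, Nat.succ_injective t.2⟩, rfl⟩
    · rintro ⟨φ, rfl⟩
      exact ⟨fun t ↦ φ ⟨t.1, congrArg (· + 1) t.2⟩, rfl⟩

/-- The homology of a short complex of modules as `Z / (Z ∩ B)`, for submodules `Z` and `B` known to
be the cycles and the boundaries. -/
def moduleCatHomologyIsoOfEq (S : ShortComplex (ModuleCat.{u} R)) {Z B : Submodule R S.X₂}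
    (hZ : LinearMap.ker S.g.hom = Z) (hB : LinearMap.range S.f.hom = B) :
    S.homology ≅ .of R (Z ⧸ B.comap Z.subtype) :=
  S.moduleCatHomologyIso ≪≫ (Submodule.Quotient.equiv _ _ (.ofEq _ _ hZ) (by
    subst hZ hB
    exact (Submodule.map_id _).trans (LinearMap.range_codRestrict _ _ _))).toModuleIso

/-- Koszul cohomology is the homology of the Koszul cocomplex. For `i = 0` the truncated `i - 1` is
again `0`, and the zero differential from degree `0` to itself stands for the incoming one. -/
def koszulComplexHomologyIso (i : ℕ) :
    (koszulComplex y M).homology i ≅ .of R (koszulCohomology y M i) :=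
  ShortComplex.homologyMapIso
      ((koszulComplex y M).isoSc' (i - 1) i (i + 1) (by cases i <;> simp) (by simp)) ≪≫
    moduleCatHomologyIsoOfEq _
      (congrArg (fun d ↦ LinearMap.ker d.hom) (koszulComplex_d y M i))
      (range_koszulComplex_d_pred y M i)

end KoszulCohomology

section SerreQuotient

variable {s : ℕ} (y : Fin s → R)

theorem homologyMap_koszulFunctor_map_smul_id {x : R} (hx : x ∈ Ideal.span (Set.range y))
    (M : ModuleCat.{u} R) (i : ℕ) : homologyMap ((koszulFunctor y).map (x • 𝟙 M)) i = 0 := by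
  have hann := span_le_annihilator_koszulCohomology y M i hx
  rw [← (koszulComplexHomologyIso y M i).toLinearEquiv.annihilator_eq] at hann
  have hsmul : homologyMap ((koszulFunctor y).map (x • 𝟙 M)) i =
      x • 𝟙 ((koszulComplex y M).homology i) := by
    rw [CategoryTheory.Functor.map_smul, CategoryTheory.Functor.map_id,
      homologicalComplex_homologyMap_smul, homologyMap_id]
    rfl
  rw [hsmul]
  ext z
  exact Module.mem_annihilator.1 hann z

variable (P : ObjectProperty (ModuleCat.{u} R)) [P.IsSerreClass]

theorem prop_koszulComplex_X {M : ModuleCat.{u} R} (hM : P M) (i : ℕ) :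
    P ((koszulComplex y M).X i) := by
  have := isClosedUnderFiniteProducts_of_isSerreClass P
  exact P.prop_of_isLimit_fan (ModuleCat.productConeIsLimit fun _ ↦ M) fun _ ↦ hM

theorem isoModSerre_homologyMap_koszulFunctor_map {M N : ModuleCat.{u} R} (φ : M ⟶ N) [Epi φ]
    (hφ : P.monoModSerre φ) (i : ℕ) :
    P.isoModSerre (homologyMap ((koszulFunctor y).map φ) i) :=
  isoModSerre_homologyMap_g P (shortExact_map_koszulFunctor y (shortExact_kernel φ))
    (prop_koszulComplex_X y P hφ) i

section

variable {x : R} (hx : x ∈ Ideal.span (Set.range y)) {M N : ModuleCat.{u} R}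
  (hM : P.monoModSerre (x • 𝟙 M)) {q : M ⟶ N} {w : (x • 𝟙 M) ≫ q = 0}
  (hq : (ShortComplex.mk (x • 𝟙 M) q w).Exact)

include hM hq in
/-- Multiplication by `x` need not be injective, so the connecting maps are compared through its
factorization `M ⟶ ker q ⟶ M`, whose first factor is surjective with kernel in `P`. -/
theorem isoModSerre_homologyMap_koszulFunctor_map_kernelLift (i : ℕ) :
    P.isoModSerre (homologyMap ((koszulFunctor y).map (kernel.lift q (x • 𝟙 M) w)) i) := by
  have := hq.epi_kernelLift
  refine isoModSerre_homologyMap_koszulFunctor_map y P _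
    (P.prop_of_iso (kernelCompMono _ (kernel.ι q)) ?_) i
  rwa [← kernel.lift_ι q (x • 𝟙 M) w] at hM

include hx in
theorem homologyMap_koszulFunctor_map_kernelLift_comp_ι (i : ℕ) :
    homologyMap ((koszulFunctor y).map (kernel.lift q (x • 𝟙 M) w) ≫
      (koszulFunctor y).map (kernel.ι q)) i = 0 := by
  rw [← Functor.map_comp, kernel.lift_ι, homologyMap_koszulFunctor_map_smul_id y hx]

variable [Epi q]

include hM hq

theorem prop_koszulComplex_homology_of_succ {i : ℕ} (hi : P ((koszulComplex y M).homology i))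
    (hi' : P ((koszulComplex y M).homology (i + 1))) :
    P ((koszulComplex y N).homology i) :=
  prop_homology_X₃_of_prop_homology_X₂ P (shortExact_map_koszulFunctor y (shortExact_kernel q)) rfl
    (isoModSerre_homologyMap_koszulFunctor_map_kernelLift y P hM hq (i + 1)).2 hi hi'

include hx

theorem prop_koszulComplex_homology_zero : P ((koszulComplex y M).homology 0) :=
  prop_homology_X₂_of_not_rel P (shortExact_map_koszulFunctor y (shortExact_kernel q)) (by simp)
    (isoModSerre_homologyMap_koszulFunctor_map_kernelLift y P hM hq 0).1
    (homologyMap_koszulFunctor_map_kernelLift_comp_ι y hx 0)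

theorem prop_koszulComplex_homology_succ {i : ℕ} (hi : P ((koszulComplex y N).homology i)) :
    P ((koszulComplex y M).homology (i + 1)) :=
  prop_homology_X₂_of_prop_homology_X₃ P (shortExact_map_koszulFunctor y (shortExact_kernel q)) rfl
    (isoModSerre_homologyMap_koszulFunctor_map_kernelLift y P hM hq (i + 1)).1
    (homologyMap_koszulFunctor_map_kernelLift_comp_ι y hx (i + 1)) hi

end

variable {M : Type u} [AddCommGroup M] [Module R M] (x : R) (W : Submodule R M)

theorem map_mkQ_comap_lsmul :
    (W.comap (LinearMap.lsmul R M x)).map W.mkQ = LinearMap.ker (LinearMap.lsmul R (M ⧸ W) x) := by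
  apply Submodule.comap_injective_of_surjective W.mkQ_surjective
  rw [Submodule.comap_map_mkQ, sup_eq_right.2 fun m hm ↦ W.smul_mem x hm]
  ext m
  exact (Submodule.Quotient.mk_eq_zero W).symm

theorem monoModSerre_smul_id_quotient
    (hW : P (.of R ((W.comap (LinearMap.lsmul R M x)).map W.mkQ))) :
    P.monoModSerre (x • 𝟙 (ModuleCat.of R (M ⧸ W))) := by
  rw [map_mkQ_comap_lsmul] at hW
  exact P.prop_of_iso (ModuleCat.kernelIsoKer (x • 𝟙 (ModuleCat.of R (M ⧸ W)))).symm hW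

theorem ker_factor_sup_range_lsmul :
    LinearMap.ker (Submodule.factor
      (le_sup_left : W ≤ W ⊔ LinearMap.range (LinearMap.lsmul R M x))) =
      LinearMap.range (LinearMap.lsmul R (M ⧸ W) x) := by
  rw [Submodule.factor, Submodule.ker_mapQ, Submodule.comap_id, Submodule.map_sup,
    Submodule.mkQ_map_self, bot_sup_eq, ← LinearMap.range_comp]
  exact LinearMap.range_comp_of_range_eq_top (LinearMap.lsmul R (M ⧸ W) x) W.range_mkQ

theorem exists_epi_exact_smul_id_quotient :
    ∃ q : ModuleCat.of R (M ⧸ W) ⟶ .of R (M ⧸ (W ⊔ LinearMap.range (LinearMap.lsmul R M x))),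
      Epi q ∧ ∃ w, (ShortComplex.mk (x • 𝟙 _) q w).Exact := by
  have hexact := LinearMap.exact_iff.2 (ker_factor_sup_range_lsmul x W)
  exact ⟨ModuleCat.ofHom (Submodule.factor le_sup_left),
    (ModuleCat.epi_iff_surjective _).2 (Submodule.factor_surjective le_sup_left),
    ModuleCat.hom_ext hexact.linearMap_comp_eq_zero,
    (ShortComplex.ShortExact.moduleCat_exact_iff_function_exact _).2 hexact⟩

end SerreQuotient

end Koszul

section InitialSubmodule

variable (M : Type*) [AddCommGroup M] [Module R M] {r : ℕ} (x : Fin r → R)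

/-- The submodule `(x₁, …, x_k)M` generated by the first `k` terms of a sequence. -/
def initialSubmodule (k : ℕ) : Submodule R M :=
  Ideal.span (x '' {j | j.val < k}) • ⊤

theorem initialSubmodule_zero : initialSubmodule M x 0 = ⊥ := by
  simp [initialSubmodule]

theorem initialSubmodule_length :
    initialSubmodule M x r = Ideal.span (Set.range x) • (⊤ : Submodule R M) := by
  simp [initialSubmodule]

theorem initialSubmodule_succ (k : Fin r) :
    initialSubmodule M x (k + 1) =
      initialSubmodule M x k ⊔ LinearMap.range (LinearMap.lsmul R M (x k)) := by
  have hset : {j : Fin r | j.val < k.val + 1} = insert k {j : Fin r | j.val < k.val} := by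
    ext j
    simp only [Set.mem_ofPred_eq, Set.mem_insert_iff, Fin.ext_iff]
    lia
  unfold initialSubmodule
  rw [hset, Set.image_insert_eq, Ideal.span_insert, Submodule.sup_smul, sup_comm,
    Submodule.ideal_span_singleton_smul]
  congr 1
  ext m
  simp [Submodule.mem_smul_pointwise_iff_exists]

end InitialSubmodule

theorem exists_epi_exact_smul_id_initialSubmodule (M : Type u) [AddCommGroup M] [Module R M]
    {r : ℕ} (x : Fin r → R) (k : Fin r) :
    ∃ q : ModuleCat.of R (M ⧸ initialSubmodule M x k) ⟶
        .of R (M ⧸ initialSubmodule M x (k.val + 1)),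
      Epi q ∧ ∃ w, (ShortComplex.mk (x k • 𝟙 _) q w).Exact := by
  rw [initialSubmodule_succ]
  exact exists_epi_exact_smul_id_quotient (x k) _

theorem forall_lt_and_iff_of_staircase {p : ℕ → ℕ → Prop} {r : ℕ} (zero : ∀ k < r, p k 0)
    (succ : ∀ k < r, ∀ i, p (k + 1) i → p k (i + 1))
    (pred : ∀ k < r, ∀ i, p k i → p k (i + 1) → p (k + 1) i) :
    (∀ i < r, p 0 i) ∧ (p 0 r ↔ p r 0) := by
  suffices h : ∀ n k, k + n = r → (∀ i < n, p k i) ∧ (p k n ↔ p r 0) from h r 0 r.zero_add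
  intro n
  induction n with
  | zero => rintro k rfl; simp
  | succ n ih =>
    intro k hk
    obtain ⟨hlt, hiff⟩ := ih (k + 1) (by lia)
    have hkr : k < r := by lia
    have hp : ∀ i < n + 1, p k i := fun
      | 0, _ => zero k hkr
      | i + 1, hi => succ k hkr i (hlt i (by lia))
    exact ⟨hp, fun h ↦ hiff.1 (pred k hkr n (hp n n.lt_succ_self) h),
      fun h ↦ succ k hkr n (hiff.2 h)⟩

theorem koszulCohomology_mem_of_isWeakRegularSeqWrt_general (T : Set (ModuleCat.{u} R))
    [ObjectProperty.IsSerreClass (C := ModuleCat.{u} R) (· ∈ T)]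
    (M : Type u) [AddCommGroup M] [Module R M] {s : ℕ} (y : Fin s → R) {r : ℕ} (x : Fin r → R)
    (hxy : ∀ i, x i ∈ Ideal.span (Set.range y)) (hx : IsWeakRegularSeqWrt T x M) :
    (∀ i < r, ModuleCat.of R (koszulCohomology y M i) ∈ T) ∧
      (ModuleCat.of R (koszulCohomology y M r) ∉ T ↔
        ModuleCat.of R (koszulCohomology y
          (M ⧸ (Ideal.span (Set.range x) • (⊤ : Submodule R M))) 0) ∉ T) := by
  let P : ObjectProperty (ModuleCat.{u} R) := (· ∈ T)
  let Q (k : ℕ) : ModuleCat.{u} R := .of R (M ⧸ initialSubmodule M x k)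
  have hQ₀ (i : ℕ) :
      ModuleCat.of R (koszulCohomology y M i) ∈ T ↔ P ((koszulComplex y (Q 0)).homology i) :=
    P.prop_iff_of_iso ((koszulComplexHomologyIso y (.of R M) i).symm ≪≫
      homologyMapIso ((koszulFunctor y).mapIso
        (Submodule.quotEquivOfEqBot _ (initialSubmodule_zero M x)).symm.toModuleIso) i)
  have hQᵣ : ModuleCat.of R (koszulCohomology y
      (M ⧸ (Ideal.span (Set.range x) • (⊤ : Submodule R M))) 0) ∈ T ↔
      P ((koszulComplex y (Q r)).homology 0) := by
    rw [← initialSubmodule_length]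
    exact P.prop_iff_of_iso (koszulComplexHomologyIso y (Q r) 0).symm
  have hmono (k : Fin r) : P.monoModSerre (x k • 𝟙 (Q k)) :=
    monoModSerre_smul_id_quotient P (x k) _ (hx k)
  choose q _ _ hq using exists_epi_exact_smul_id_initialSubmodule M x
  simp only [hQ₀, hQᵣ, not_iff_not]
  exact forall_lt_and_iff_of_staircase
    (p := fun k i ↦ P ((koszulComplex y (Q k)).homology i))
    (fun k hk ↦ prop_koszulComplex_homology_zero y P (hxy _) (hmono ⟨k, hk⟩) (hq ⟨k, hk⟩))
    (fun k hk _ ↦ prop_koszulComplex_homology_succ y P (hxy _) (hmono ⟨k, hk⟩) (hq ⟨k, hk⟩))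
    (fun k hk _ ↦ prop_koszulComplex_homology_of_succ y P (hmono ⟨k, hk⟩) (hq ⟨k, hk⟩))

/-- **Theorem.** Let `𝔗` be a half centered torsion theory, `𝔞` a finitely generated ideal
of `R` with generating set `y₁, …, y_s` and `M` an `R`-module. If `x₁, …, x_r` is a weak
`M`-regular sequence with respect to `𝔗` consisting of elements of `𝔞`, then
`H^i(y; M) ∈ 𝔗` for all `0 ≤ i ≤ r - 1`, and moreover `H^r(y; M) ∉ 𝔗` if and only if
`H^0(y; M/(x₁,…,x_r)M) ∉ 𝔗`. -/
theorem koszulCohomology_mem_of_isWeakRegularSeqWrt (T : Set (ModuleCat.{u} R))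
    (hT : IsTorsionTheory R T) (hHC : IsHalfCentered T)
    (a : Ideal R) (M : Type u) [AddCommGroup M] [Module R M]
    {s : ℕ} (y : Fin s → R) (hy : Ideal.span (Set.range y) = a)
    {r : ℕ} (x : Fin r → R) (hxa : ∀ i, x i ∈ a) (hx : IsWeakRegularSeqWrt T x M) :
    (∀ i < r, ModuleCat.of R (koszulCohomology y M i) ∈ T) ∧
      (ModuleCat.of R (koszulCohomology y M r) ∉ T ↔
        ModuleCat.of R (koszulCohomology y
          (M ⧸ (Ideal.span (Set.range x) • (⊤ : Submodule R M))) 0) ∉ T) := by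
  have := hT.isSerreClass hHC.nonempty
  exact koszulCohomology_mem_of_isWeakRegularSeqWrt_general T M y x (fun i ↦ hy ▸ hxa i) hx
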